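/- arXiv:2210.14780 — 2 statements merged into one kernel-verified Lean document; each statement's English description precedes it below -/
import Mathlib

section
/- Let c' ∈ c^{∖k} with c' > 0. If ω c' + S(c' − ε_c) ≤ |γ| ≤ ω c' + S(c' + ε_c), then z = sign(γ)·c' is a minimizer over ℝ of the function G. -/
open Finset Filter

noncomputable section

/-- The sign of a real number, with the convention `sgn 0 = 1`. -/
def sgn (t : ℝ) : ℝ := if t < 0 then -1 else 1

/-- A permutation sorting the absolute values of `β` in nonincreasing order. -/
def sortPerm {p : ℕ} (β : Fin p → ℝ) : Equiv.Perm (Fin p) :=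
  (Fin.revPerm).trans (Tuple.sort fun j => |β j|)

/-- The sorted ℓ₁ norm `J(β) = Σ_j λ_j |β|_(j)`. -/
def sortedL1 {p : ℕ} (lam β : Fin p → ℝ) : ℝ :=
  ∑ j, lam j * |β (sortPerm β j)|

/-- `β(z)`: the vector obtained from `β` by replacing entries of the cluster
`{i : |β i| = ck}` by `sign(β i) * z`. -/
def cupd {p : ℕ} (β : Fin p → ℝ) (ck z : ℝ) : Fin p → ℝ :=
  fun i => if |β i| = ck then sgn (β i) * z else β i

/-- The partial sorted ℓ₁ norm `H(z) = J(β(z))`. -/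
def Hfun {p : ℕ} (lam β : Fin p → ℝ) (ck : ℝ) (z : ℝ) : ℝ :=
  sortedL1 lam (cupd β ck z)

/-- `S(w) = Σ_{j ∈ C(w)} λ_{(j)⁻_w}`, where `C(w) = {j : |β(w)_j| = |w|}`. -/
def Sval {p : ℕ} (lam β : Fin p → ℝ) (ck : ℝ) (w : ℝ) : ℝ :=
  ∑ j, if |cupd β ck w j| = |w| then lam ((sortPerm (cupd β ck w))⁻¹ j) else 0

/-- squared Euclidean norm -/
def sqnorm {n : ℕ} (v : Fin n → ℝ) : ℝ := ∑ i, (v i) ^ 2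

/-- `G(z) = (1/2)‖y − Xβ(z)‖² + H(z)`. -/
def Gfun {n p : ℕ} (lam : Fin p → ℝ) (X : Matrix (Fin n) (Fin p) ℝ) (y : Fin n → ℝ)
    (β : Fin p → ℝ) (ck : ℝ) (z : ℝ) : ℝ :=
  (1/2) * sqnorm (fun i => y i - ∑ j, X i j * cupd β ck z j) + Hfun lam β ck z

/-- `x̃ = Σ_{j ∈ C_k} sign(β_j) X_{:j}`. -/
def xtil {n p : ℕ} (X : Matrix (Fin n) (Fin p) ℝ) (β : Fin p → ℝ) (ck : ℝ) : Fin n → ℝ :=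
  fun i => ∑ j, if |β j| = ck then sgn (β j) * X i j else 0

/-- `γ = c_k ω + x̃ᵀ r` where `r = y − Xβ` and `ω = ‖x̃‖²`. -/
def gam {n p : ℕ} (X : Matrix (Fin n) (Fin p) ℝ) (y : Fin n → ℝ) (β : Fin p → ℝ) (ck : ℝ) : ℝ :=
  ck * sqnorm (xtil X β ck) + ∑ i, xtil X β ck i * (y i - ∑ j, X i j * β j)

end

/-!
Fix a permutation `σ` of the weights. By the rearrangement inequality, `H` is bounded below by
`z ↦ ∑ j, λ (σ⁻¹ j) |β(z) j|`, which is affine in `|z|` and touches `H` wherever `σ` sorts `|β(z)|`.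
A permutation sorting `|β(c' ± ε)|` also sorts `|β(c')|`, so `S(c' - ε)` and `S(c' + ε)` are both
subgradients at `c'` of `H`, viewed as a function of `|z|`. Up to a constant, the quadratic part of
`G` is `ω z² / 2 - γ z ≥ ω |z|² / 2 - |γ| |z|`, with equality at `z = sgn γ * c'`; hence
`ω c' + S(c' ± ε) - |γ|` are subgradients at `c'` of a minorant of `G` that agrees with `G` at
`sgn γ * c'`, and the hypotheses say that `0` lies between them.
-/

lemma abs_sgn (t : ℝ) : |sgn t| = 1 := by
  unfold sgn; split_ifs <;> simp

lemma abs_sgn_mul (t z : ℝ) : |sgn t * z| = |z| := by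
  rw [abs_mul, abs_sgn, one_mul]

lemma self_mul_sgn (t : ℝ) : t * sgn t = |t| := by
  unfold sgn
  split_ifs with h
  · rw [abs_of_neg h, mul_neg_one]
  · rw [abs_of_nonneg (not_lt.mp h), mul_one]

lemma sgn_mul_abs (t : ℝ) : sgn t * |t| = t := by
  rw [← self_mul_sgn, mul_left_comm, ← sq, ← sq_abs, abs_sgn, one_pow, mul_one]

section SortedL1

variable {p : ℕ} {lam : Fin p → ℝ}

lemma antitone_abs_sortPerm (b : Fin p → ℝ) : Antitone fun j => |b (sortPerm b j)| :=
  fun _ _ hij => Tuple.monotone_sort (fun j => |b j|) (Fin.rev_le_rev.mpr hij)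

lemma sum_mul_abs_le_sortedL1 (hlam : Antitone lam) (b : Fin p → ℝ) (σ : Equiv.Perm (Fin p)) :
    ∑ j, lam (σ⁻¹ j) * |b j| ≤ sortedL1 lam b := by
  have h := (hlam.monovary (antitone_abs_sortPerm b)).sum_mul_comp_perm_le_sum_mul
    (σ := σ.trans (sortPerm b).symm)
  rw [← Equiv.sum_comp σ fun j => lam (σ⁻¹ j) * |b j|]
  simpa [sortedL1] using h

lemma sortedL1_eq_sum_mul_abs (hlam : Antitone lam) (b : Fin p → ℝ) (σ : Equiv.Perm (Fin p))
    (hσ : Antitone fun j => |b (σ j)|) :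
    sortedL1 lam b = ∑ j, lam (σ⁻¹ j) * |b j| := by
  refine le_antisymm ?_ (sum_mul_abs_le_sortedL1 hlam b σ)
  have h := (hlam.monovary hσ).sum_mul_comp_perm_le_sum_mul (σ := (sortPerm b).trans σ.symm)
  rw [← Equiv.sum_comp σ fun j => lam (σ⁻¹ j) * |b j|]
  simpa [sortedL1] using h

lemma sortedL1_congr_abs (lam : Fin p → ℝ) {a b : Fin p → ℝ} (h : ∀ j, |a j| = |b j|) :
    sortedL1 lam a = sortedL1 lam b := by
  simp only [sortedL1, sortPerm, h]

end SortedL1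

section ClusterUpdate

variable {p : ℕ} {lam : Fin p → ℝ} (β : Fin p → ℝ) (ck : ℝ)

lemma abs_cupd (z : ℝ) (j : Fin p) :
    |cupd β ck z j| = if |β j| = ck then |z| else |β j| := by
  unfold cupd
  split_ifs
  · exact abs_sgn_mul _ _
  · rfl

lemma Hfun_congr_abs (lam : Fin p → ℝ) {u v : ℝ} (h : |u| = |v|) :
    Hfun lam β ck u = Hfun lam β ck v :=
  sortedL1_congr_abs lam fun j => by simp only [abs_cupd, h]

/-- The total weight that the cluster `{j : |β j| = ck}` receives when the weights `lam` are
distributed according to the ranking `σ`, i.e. the slope in `|z|` of `∑ j, λ (σ⁻¹ j) |β(z) j|`.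
As for `sortPerm`, `σ` maps ranks to indices. -/
noncomputable def clusterWeight (lam β : Fin p → ℝ) (ck : ℝ) (σ : Equiv.Perm (Fin p)) : ℝ :=
  ∑ j, if |β j| = ck then lam (σ⁻¹ j) else 0

lemma sum_mul_abs_cupd_add_clusterWeight_mul (lam : Fin p → ℝ) (σ : Equiv.Perm (Fin p))
    (u v : ℝ) :
    ∑ j, lam (σ⁻¹ j) * |cupd β ck u j| + clusterWeight lam β ck σ * (|v| - |u|) =
      ∑ j, lam (σ⁻¹ j) * |cupd β ck v j| := by
  rw [clusterWeight, sum_mul, ← sum_add_distrib]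
  refine sum_congr rfl fun j _ => ?_
  rw [abs_cupd, abs_cupd]
  split_ifs <;> ring

lemma Hfun_add_clusterWeight_mul_le (hlam : Antitone lam) {σ : Equiv.Perm (Fin p)} {u : ℝ}
    (hσ : Antitone fun j => |cupd β ck u (σ j)|) (v : ℝ) :
    Hfun lam β ck u + clusterWeight lam β ck σ * (|v| - |u|) ≤ Hfun lam β ck v := by
  rw [Hfun, sortedL1_eq_sum_mul_abs hlam _ σ hσ, sum_mul_abs_cupd_add_clusterWeight_mul]
  exact sum_mul_abs_le_sortedL1 hlam _ σ

variable {β ck}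

lemma Sval_eq_clusterWeight (lam : Fin p → ℝ) {w : ℝ} (h : ∀ j, |β j| ≠ ck → |β j| ≠ |w|) :
    Sval lam β ck w = clusterWeight lam β ck (sortPerm (cupd β ck w)) := by
  refine sum_congr rfl fun j _ => ?_
  rw [abs_cupd]
  by_cases hj : |β j| = ck
  · simp only [if_pos hj, if_true]
  · simp only [if_neg hj, if_neg (h j hj)]

lemma antitone_abs_cupd_sortPerm {u w : ℝ}
    (hle : ∀ j, |β j| ≠ ck → |β j| ≤ |w| → |β j| ≤ |u|)
    (hge : ∀ j, |β j| ≠ ck → |w| ≤ |β j| → |u| ≤ |β j|) :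
    Antitone fun j => |cupd β ck u (sortPerm (cupd β ck w) j)| := by
  intro i j hij
  have h := antitone_abs_sortPerm (cupd β ck w) hij
  simp only [abs_cupd] at h ⊢
  split_ifs at h ⊢ with hj hi hi
  · exact le_rfl
  · exact hge _ hi h
  · exact hle _ hj h
  · exact h

lemma Hfun_add_Sval_mul_le (hlam : Antitone lam) {u w : ℝ}
    (hside : ∀ j, |β j| ≠ ck → |β j| < |w| ∧ |β j| ≤ |u| ∨ |w| < |β j| ∧ |u| ≤ |β j|) (v : ℝ) :
    Hfun lam β ck u + Sval lam β ck w * (|v| - |u|) ≤ Hfun lam β ck v := by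
  rw [Sval_eq_clusterWeight lam fun j hj => (hside j hj).elim (·.1.ne) (·.1.ne')]
  refine Hfun_add_clusterWeight_mul_le β ck hlam (antitone_abs_cupd_sortPerm ?_ ?_) v
  · exact fun j hj hle => (hside j hj).elim And.right fun h => absurd hle h.1.not_ge
  · exact fun j hj hge => (hside j hj).elim (fun h => absurd hge h.1.not_ge) And.right

end ClusterUpdate

section Objective

variable {n p : ℕ}

lemma sqnorm_nonneg (v : Fin n → ℝ) : 0 ≤ sqnorm v :=
  sum_nonneg fun _ _ => sq_nonneg _

lemma sqnorm_sub_mul (a b : Fin n → ℝ) (t : ℝ) :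
    sqnorm (fun i => a i - t * b i) = sqnorm a - 2 * t * ∑ i, b i * a i + t ^ 2 * sqnorm b := by
  simp only [sqnorm, mul_sum, ← sum_sub_distrib, ← sum_add_distrib]
  exact sum_congr rfl fun i _ => by ring

variable (lam : Fin p → ℝ) (X : Matrix (Fin n) (Fin p) ℝ) (y : Fin n → ℝ) (β : Fin p → ℝ) (ck : ℝ)

lemma sum_mul_cupd (z : ℝ) (i : Fin n) :
    ∑ j, X i j * cupd β ck z j = ∑ j, X i j * β j + (z - ck) * xtil X β ck i := by
  rw [xtil, mul_sum, ← sum_add_distrib]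
  refine sum_congr rfl fun j _ => ?_
  unfold cupd
  split_ifs with h
  · have hβ : sgn (β j) * ck = β j := h ▸ sgn_mul_abs (β j)
    linear_combination X i j * hβ
  · ring

lemma Gfun_eq_quadratic_add_Hfun (z : ℝ) :
    Gfun lam X y β ck z =
      1 / 2 * sqnorm (fun i => y i - ∑ j, X i j * β j)
        + sqnorm (xtil X β ck) / 2 * (z ^ 2 - ck ^ 2) - gam X y β ck * (z - ck)
        + Hfun lam β ck z := by
  simp only [Gfun, sum_mul_cupd, ← sub_sub, sqnorm_sub_mul, gam]
  ring

variable {lam β ck}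

lemma Gfun_add_mul_le_of_Hfun_add_mul_le {c s v : ℝ}
    (hs : Hfun lam β ck c + s * (|v| - c) ≤ Hfun lam β ck v) :
    Gfun lam X y β ck (sgn (gam X y β ck) * c)
        + (sqnorm (xtil X β ck) * c + s - |gam X y β ck|) * (|v| - c) ≤
      Gfun lam X y β ck v := by
  rw [Gfun_eq_quadratic_add_Hfun, Gfun_eq_quadratic_add_Hfun,
    Hfun_congr_abs β ck lam (abs_sgn_mul (gam X y β ck) c)]
  set γ := gam X y β ck
  set ω := sqnorm (xtil X β ck)
  have hsq : (sgn γ * c) ^ 2 = c ^ 2 := sq_eq_sq_iff_abs_eq_abs _ _ |>.mpr (abs_sgn_mul γ c)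
  have hγc : γ * (sgn γ * c) = |γ| * c := by rw [← mul_assoc, self_mul_sgn]
  have hγv : γ * v ≤ |γ| * |v| := (le_abs_self _).trans (abs_mul _ _).le
  have hω : 0 ≤ ω * (|v| - c) ^ 2 := mul_nonneg (sqnorm_nonneg _) (sq_nonneg _)
  rw [hsq, ← sq_abs v]
  linarith

theorem cluster_value_minimizes_G_general (hlam : Antitone lam) {c' ε : ℝ} (hε_pos : 0 < ε)
    (hε_le : ε ≤ c') (hsep : ∀ j, |β j| ≠ ck → |β j| = c' ∨ ε < |(|β j| - c')|)
    (hγ_lo : sqnorm (xtil X β ck) * c' + Sval lam β ck (c' - ε) ≤ |gam X y β ck|)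
    (hγ_hi : |gam X y β ck| ≤ sqnorm (xtil X β ck) * c' + Sval lam β ck (c' + ε)) (w : ℝ) :
    Gfun lam X y β ck (sgn (gam X y β ck) * c') ≤ Gfun lam X y β ck w := by
  have hc'_pos : 0 < c' := hε_pos.trans_le hε_le
  have hc' : |c'| = c' := abs_of_pos hc'_pos
  have hlo : Hfun lam β ck c' + Sval lam β ck (c' - ε) * (|w| - |c'|) ≤ Hfun lam β ck w := by
    refine Hfun_add_Sval_mul_le hlam (fun j hj => ?_) w
    rw [hc', abs_of_nonneg (sub_nonneg.mpr hε_le)]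
    grind
  have hhi : Hfun lam β ck c' + Sval lam β ck (c' + ε) * (|w| - |c'|) ≤ Hfun lam β ck w := by
    refine Hfun_add_Sval_mul_le hlam (fun j hj => ?_) w
    rw [hc', abs_of_pos (add_pos hc'_pos hε_pos)]
    grind
  rw [hc'] at hlo hhi
  rcases le_total |w| c' with hw | hw
  · have hG := Gfun_add_mul_le_of_Hfun_add_mul_le X y hlo
    linarith [mul_nonneg_of_nonpos_of_nonpos (sub_nonpos.mpr hγ_lo) (sub_nonpos.mpr hw)]
  · have hG := Gfun_add_mul_le_of_Hfun_add_mul_le X y hhi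
    linarith [mul_nonneg (sub_nonneg.mpr hγ_hi) (sub_nonneg.mpr hw)]

end Objective

/-- if `c' ∈ c^{∖k}`, `c' > 0` and
`ω c' + S(c' − ε_c) ≤ |γ| ≤ ω c' + S(c' + ε_c)`, then `z = sign(γ)·c'` minimizes `G`. -/
theorem cluster_value_minimizes_G
    {n p m : ℕ} (hn : 0 < n) (hp : 0 < p) (hm : 0 < m)
    (lam : Fin p → ℝ)
    (hlam_mono : ∀ i j : Fin p, i ≤ j → lam j ≤ lam i)
    (hlam_nonneg : ∀ j, 0 ≤ lam j)
    (β : Fin p → ℝ) (c : Fin m → ℝ)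
    (hc_anti : StrictAnti c) (hc_nonneg : ∀ i, 0 ≤ c i)
    (h_attain : ∀ i, ∃ j, |β j| = c i)
    (h_cover : ∀ j, ∃ i, |β j| = c i)
    (k : Fin m)
    (ε : ℝ) (hε_pos : 0 < ε)
    (hε_sep : ∀ i j, i ≠ j → ε < |c i - c j|)
    (hε_min : ∀ i, c i ≠ 0 → ε < c i)
    (X : Matrix (Fin n) (Fin p) ℝ) (y : Fin n → ℝ)
    (c' : ℝ) (hc' : ∃ i, i ≠ k ∧ c' = c i) (hc'_pos : 0 < c')
    (hγ_lo : sqnorm (xtil X β (c k)) * c' + Sval lam β (c k) (c' - ε) ≤ |gam X y β (c k)|)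
    (hγ_hi : |gam X y β (c k)| ≤ sqnorm (xtil X β (c k)) * c' + Sval lam β (c k) (c' + ε)) :
    ∀ w : ℝ,
      Gfun lam X y β (c k) (sgn (gam X y β (c k)) * c') ≤ Gfun lam X y β (c k) w := by
  obtain ⟨i, -, rfl⟩ := hc'
  refine cluster_value_minimizes_G_general X y (fun i j => hlam_mono i j) hε_pos
    (hε_min i hc'_pos.ne').le (fun j _ => ?_) hγ_lo hγ_hi
  obtain ⟨l, hl⟩ := h_cover j
  exact hl ▸ (eq_or_ne l i).imp (congrArg c) (hε_sep l i)
end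

section
/- Let λ ∈ ℝ^p be nonincreasing with λ_p > 0, let X ∈ ℝ^{n×p} be nonzero with L = ‖X‖₂² (squared spectral operator norm), and let y ∈ ℝ^n. Fix an integer v ≥ 1, and let (β^{(t)})_{t≥0} be a sequence in ℝ^p such that (i) P(β^{(t+1)}) ≤ P(β^{(t)}) for every t ≥ 0, and (ii) for every t with t ≡ 0 (mod v), β^{(t+1)} is the unique minimizer over u ∈ ℝ^p of (1/2)‖u − (β^{(t)} − (1/L)Xᵀ(Xβ^{(t)} − y))‖² + J(u)/L (the proximal gradient step with step size 1/L). Then lim_{t→∞} (P(β^{(t)}) − P(β*)) = 0, where β* is any global minimizer of P. -/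
open Finset Filter

noncomputable section

/-- The SLOPE objective `P(β) = (1/2)‖y − Xβ‖² + J(β)`. -/
def Pobj {n p : ℕ} (lam : Fin p → ℝ)
    (X : EuclideanSpace ℝ (Fin p) →L[ℝ] EuclideanSpace ℝ (Fin n))
    (y : EuclideanSpace ℝ (Fin n)) (b : EuclideanSpace ℝ (Fin p)) : ℝ :=
  (1 / 2) * ‖y - X b‖ ^ 2 + sortedL1 lam (fun j => b j)

/-- The proximal-gradient-step objective
`u ↦ (1/2)‖u − (β − (1/L)Xᵀ(Xβ − y))‖² + J(u)/L` with `L = ‖X‖₂²`. -/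
def proxObj {n p : ℕ} (lam : Fin p → ℝ)
    (X : EuclideanSpace ℝ (Fin p) →L[ℝ] EuclideanSpace ℝ (Fin n))
    (y : EuclideanSpace ℝ (Fin n)) (b u : EuclideanSpace ℝ (Fin p)) : ℝ :=
  (1 / 2) * ‖u - (b - (‖X‖ ^ 2)⁻¹ • (ContinuousLinearMap.adjoint X) (X b - y))‖ ^ 2 +
    sortedL1 lam (fun j => u j) / ‖X‖ ^ 2

end

/-!
Convexity of the penalty and the descent lemma for the least-squares term show that a proximal
gradient step from `b` to `b'` satisfies, for every point `c` and every `s ∈ [0, 1]`,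
`P(b') ≤ (1 - s) P(b) + s P(c) + s² (L / 2) ‖c - b‖²`. The iterates stay at bounded distance from
the set of minimizers, so taking `c` to be a nearby minimizer the limit `d` of the gaps
`P(β⁽ᵗ⁾) - P(β*)` satisfies `d ≤ (1 - s) d + s² C`, that is `d ≤ s C`, for all small `s > 0`,
whence `d = 0`. The boundedness holds because the sorted `ℓ¹` norm is coercive unless `λ = 0`; for
`λ = 0` a minimizer close to `b` is `b + x` with `x` a preimage of `X β* - X b` under `X` of
controlled norm.
-/

open scoped Topology RealInnerProductSpace

section ProximalGradient

variable {E : Type*} [NormedAddCommGroup E] [InnerProductSpace ℝ E] {f g : E → ℝ} {L : ℝ}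

/-- The objective that a proximal gradient step from `b` minimizes over `u`: the model of `f + g` in
which `f` is replaced by its second-order upper bound at `b` with gradient `G` and curvature `L`.
The constant `f b` is left out. -/
noncomputable def quadraticModel (L : ℝ) (g : E → ℝ) (b G u : E) : ℝ :=
  ⟪G, u - b⟫ + L / 2 * ‖u - b‖ ^ 2 + g u

lemma mul_half_norm_sub_gradStep_sq (hL : L ≠ 0) (b G u : E) :
    L * (1 / 2 * ‖u - (b - L⁻¹ • G)‖ ^ 2) =
      ⟪G, u - b⟫ + L / 2 * ‖u - b‖ ^ 2 + L⁻¹ / 2 * ‖G‖ ^ 2 := by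
  have h : u - (b - L⁻¹ • G) = (u - b) + L⁻¹ • G := by abel
  rw [h, norm_add_sq_real, inner_smul_right, real_inner_comm, norm_smul, mul_pow,
    Real.norm_eq_abs, sq_abs]
  field_simp
  ring

lemma isMinOn_prox_iff_isMinOn_quadraticModel (hL : 0 < L) (g : E → ℝ) (b b' G : E) :
    IsMinOn (fun u => 1 / 2 * ‖u - (b - L⁻¹ • G)‖ ^ 2 + g u / L) Set.univ b' ↔
      IsMinOn (quadraticModel L g b G) Set.univ b' := by
  simp only [isMinOn_univ_iff]
  refine forall_congr' fun u => ?_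
  rw [← mul_le_mul_iff_right₀ hL]
  simp only [quadraticModel, mul_add, mul_half_norm_sub_gradStep_sq hL.ne',
    mul_div_cancel₀ _ hL.ne']
  constructor <;> intro h <;> linarith

lemma add_le_of_isMinOn_quadraticModel (hg : ConvexOn ℝ Set.univ g) {b b' G : E}
    (hsupport : ∀ u, f b + ⟪G, u - b⟫ ≤ f u)
    (hsmooth : ∀ u, f u ≤ f b + ⟪G, u - b⟫ + L / 2 * ‖u - b‖ ^ 2)
    (hmin : IsMinOn (quadraticModel L g b G) Set.univ b')
    (c : E) {s : ℝ} (hs₀ : 0 ≤ s) (hs₁ : s ≤ 1) :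
    f b' + g b' ≤ (1 - s) * (f b + g b) + s * (f c + g c) + s ^ 2 * (L / 2 * ‖c - b‖ ^ 2) := by
  have hconv : g (b + s • (c - b)) ≤ (1 - s) * g b + s * g c := by
    have h := hg.2 (Set.mem_univ b) (Set.mem_univ c) (sub_nonneg.2 hs₁) hs₀ (by ring)
    rwa [show (1 - s) • b + s • c = b + s • (c - b) by module] at h
  have hmodel : ⟪G, b' - b⟫ + L / 2 * ‖b' - b‖ ^ 2 + g b' ≤
      s * ⟪G, c - b⟫ + s ^ 2 * (L / 2 * ‖c - b‖ ^ 2) + g (b + s • (c - b)) := by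
    have h := isMinOn_univ_iff.1 hmin (b + s • (c - b))
    rw [quadraticModel, quadraticModel, add_sub_cancel_left, inner_smul_right, norm_smul, mul_pow,
      Real.norm_eq_abs, sq_abs] at h
    linarith
  have hc := mul_le_mul_of_nonneg_left (hsupport c) hs₀
  linarith [hsmooth b']

lemma tendsto_zero_of_frequently_le {δ : ℕ → ℝ} (hδ : Antitone δ) (hδ₀ : ∀ t, 0 ≤ δ t) {C : ℝ}
    (hstep : ∃ᶠ t in atTop, ∀ s : ℝ, 0 ≤ s → s ≤ 1 → δ (t + 1) ≤ (1 - s) * δ t + s ^ 2 * C) :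
    Tendsto δ atTop (𝓝 0) := by
  obtain ⟨d, hd⟩ : ∃ d, Tendsto δ atTop (𝓝 d) :=
    ⟨_, tendsto_atTop_ciInf hδ ⟨0, Set.forall_mem_range.2 hδ₀⟩⟩
  have hlimit (s : ℝ) (hs₀ : 0 ≤ s) (hs₁ : s ≤ 1) : d ≤ (1 - s) * d + s ^ 2 * C :=
    ge_of_tendsto_of_frequently ((hd.const_mul (1 - s)).add_const (s ^ 2 * C))
      (hstep.mono fun t ht => (hδ.le_of_tendsto hd (t + 1)).trans (ht s hs₀ hs₁))
  have hsmall : ∀ᶠ s : ℝ in 𝓝[>] 0, d ≤ s * C := by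
    filter_upwards [Ioc_mem_nhdsGT (zero_lt_one' ℝ)] with s hs
    exact le_of_mul_le_mul_left (by linarith [hlimit s hs.1.le hs.2]) hs.1
  have hlin : Tendsto (fun s : ℝ => s * C) (𝓝[>] 0) (𝓝 0) := by
    simpa using ((continuous_mul_const C).tendsto 0).mono_left nhdsWithin_le_nhds
  rwa [(ge_of_tendsto hlin hsmall).antisymm (ge_of_tendsto' hd hδ₀)] at hd

lemma tendsto_of_frequently_isMinOn_quadraticModel (hg : ConvexOn ℝ Set.univ g) (hL : 0 ≤ L)
    {G : E → E} (hsupport : ∀ b u, f b + ⟪G b, u - b⟫ ≤ f u)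
    (hsmooth : ∀ b u, f u ≤ f b + ⟪G b, u - b⟫ + L / 2 * ‖u - b‖ ^ 2)
    {b : ℕ → E} (hdescent : Antitone fun t => f (b t) + g (b t))
    (hstep : ∃ᶠ t in atTop, IsMinOn (quadraticModel L g (b t) (G (b t))) Set.univ (b (t + 1)))
    {m R : ℝ} (hm : ∀ u, m ≤ f u + g u)
    (hdist : ∀ t, ∃ c, f c + g c = m ∧ ‖c - b t‖ ≤ R) :
    Tendsto (fun t => f (b t) + g (b t) - m) atTop (𝓝 0) := by
  refine tendsto_zero_of_frequently_le (C := L / 2 * R ^ 2)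
    (fun i j hij => sub_le_sub_right (hdescent hij) m) (fun t => sub_nonneg.2 (hm _))
    (hstep.mono fun t hmin s hs₀ hs₁ => ?_)
  obtain ⟨c, hcm, hcR⟩ := hdist t
  calc f (b (t + 1)) + g (b (t + 1)) - m
      ≤ (1 - s) * (f (b t) + g (b t)) + s * (f c + g c)
          + s ^ 2 * (L / 2 * ‖c - b t‖ ^ 2) - m :=
        sub_le_sub_right
          (add_le_of_isMinOn_quadraticModel hg (hsupport _) (hsmooth _) hmin c hs₀ hs₁) m
    _ = (1 - s) * (f (b t) + g (b t) - m) + s ^ 2 * (L / 2 * ‖c - b t‖ ^ 2) := by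
        rw [hcm]; ring
    _ ≤ (1 - s) * (f (b t) + g (b t) - m) + s ^ 2 * (L / 2 * R ^ 2) := by gcongr

end ProximalGradient

section LeastSquares

variable {E F : Type*} [NormedAddCommGroup E] [InnerProductSpace ℝ E] [CompleteSpace E]
  [NormedAddCommGroup F] [InnerProductSpace ℝ F] [CompleteSpace F]

lemma half_norm_sub_apply_sq_eq (X : E →L[ℝ] F) (y : F) (b u : E) :
    1 / 2 * ‖y - X u‖ ^ 2 = 1 / 2 * ‖y - X b‖ ^ 2 +
      ⟪ContinuousLinearMap.adjoint X (X b - y), u - b⟫ + 1 / 2 * ‖X (u - b)‖ ^ 2 := by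
  have h : y - X u = -((X b - y) + X (u - b)) := by rw [map_sub]; abel
  rw [ContinuousLinearMap.adjoint_inner_left, h, norm_neg, norm_add_sq_real, norm_sub_rev y]
  ring

lemma linearization_le_half_norm_sub_apply_sq (X : E →L[ℝ] F) (y : F) (b u : E) :
    1 / 2 * ‖y - X b‖ ^ 2 + ⟪ContinuousLinearMap.adjoint X (X b - y), u - b⟫ ≤
      1 / 2 * ‖y - X u‖ ^ 2 := by
  rw [half_norm_sub_apply_sq_eq X y b u]
  exact le_add_of_nonneg_right (by positivity)

lemma half_norm_sub_apply_sq_le_linearization_add_sq (X : E →L[ℝ] F) (y : F) (b u : E) :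
    1 / 2 * ‖y - X u‖ ^ 2 ≤ 1 / 2 * ‖y - X b‖ ^ 2 +
      ⟪ContinuousLinearMap.adjoint X (X b - y), u - b⟫ + ‖X‖ ^ 2 / 2 * ‖u - b‖ ^ 2 := by
  have h : ‖X (u - b)‖ ^ 2 ≤ ‖X‖ ^ 2 * ‖u - b‖ ^ 2 := by
    grw [X.le_opNorm, mul_pow]
  rw [half_norm_sub_apply_sq_eq X y b u]
  linarith

end LeastSquares

lemma exists_apply_eq_and_norm_sub_le {𝕜 E F : Type*} [NontriviallyNormedField 𝕜]
    [NormedAddCommGroup E] [NormedSpace 𝕜 E] [CompleteSpace E]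
    [NormedAddCommGroup F] [NormedSpace 𝕜 F] (X : E →L[𝕜] F) [CompleteSpace X.range] :
    ∃ K > 0, ∀ a b, ∃ c, X c = X a ∧ ‖c - b‖ ≤ K * ‖X a - X b‖ := by
  obtain ⟨K, hK, hpre⟩ := X.rangeRestrict.exists_preimage_norm_le X.surjective_rangeRestrict
  refine ⟨K, hK, fun a b => ?_⟩
  obtain ⟨x, hx, hxK⟩ := hpre (X.rangeRestrict (a - b))
  have hXx : X x = X a - X b := by
    simpa using congrArg Subtype.val hx
  refine ⟨b + x, by rw [map_add, hXx, add_sub_cancel], ?_⟩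
  rw [add_sub_cancel_left, ← map_sub]
  exact hxK

section SortedL1

variable {p : ℕ} {lam : Fin p → ℝ}

lemma antitone_abs_comp_sortPerm (β : Fin p → ℝ) : Antitone fun j => |β (sortPerm β j)| :=
  fun _ _ hij => Tuple.monotone_sort (fun j => |β j|) (Fin.rev_le_rev.2 hij)

lemma sum_mul_abs_comp_perm_le_sortedL1 (hlam : Antitone lam) (β : Fin p → ℝ)
    (σ : Equiv.Perm (Fin p)) : ∑ j, lam j * |β (σ j)| ≤ sortedL1 lam β := by
  have h := (hlam.monovary (antitone_abs_comp_sortPerm β)).sum_mul_comp_perm_le_sum_mul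
    (σ := σ.trans (sortPerm β).symm)
  simpa [sortedL1] using h

lemma convexOn_sortedL1 (hlam : Antitone lam) (hlam₀ : 0 ≤ lam) :
    ConvexOn ℝ Set.univ (sortedL1 lam) := by
  refine ⟨convex_univ, fun a _ b _ r s hr hs _ => ?_⟩
  set σ := sortPerm (r • a + s • b)
  calc sortedL1 lam (r • a + s • b)
      = ∑ j, lam j * |r * a (σ j) + s * b (σ j)| := rfl
    _ ≤ ∑ j, lam j * (r * |a (σ j)| + s * |b (σ j)|) := by
        refine sum_le_sum fun j _ => mul_le_mul_of_nonneg_left ?_ (hlam₀ j)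
        simpa [abs_mul, abs_of_nonneg hr, abs_of_nonneg hs]
          using abs_add_le (r * a (σ j)) (s * b (σ j))
    _ = r * ∑ j, lam j * |a (σ j)| + s * ∑ j, lam j * |b (σ j)| := by
        rw [mul_sum, mul_sum, ← sum_add_distrib]
        exact sum_congr rfl fun j _ => by ring
    _ ≤ r • sortedL1 lam a + s • sortedL1 lam b := by
        rw [smul_eq_mul, smul_eq_mul]
        gcongr <;> exact sum_mul_abs_comp_perm_le_sortedL1 hlam _ σ

lemma mul_abs_le_sortedL1 (hlam : Antitone lam) (hlam₀ : 0 ≤ lam) (β : Fin p → ℝ)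
    (k i : Fin p) : lam k * |β i| ≤ sortedL1 lam β := by
  have hsum := sum_mul_abs_comp_perm_le_sortedL1 hlam β (Equiv.swap k i)
  have hterm := single_le_sum
    (fun j _ => mul_nonneg (hlam₀ j) (abs_nonneg (β (Equiv.swap k i j)))) (mem_univ k)
  rw [Equiv.swap_apply_left] at hterm
  exact hterm.trans hsum

lemma sortedL1_nonneg (hlam₀ : 0 ≤ lam) (β : Fin p → ℝ) : 0 ≤ sortedL1 lam β :=
  sum_nonneg fun j _ => mul_nonneg (hlam₀ j) (abs_nonneg _)

lemma exists_norm_le_mul_sortedL1 (hlam : Antitone lam) (hlam₀ : 0 ≤ lam) (hne : lam ≠ 0) :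
    ∃ K ≥ 0, ∀ b : EuclideanSpace ℝ (Fin p), ‖b‖ ≤ K * sortedL1 lam fun j => b j := by
  obtain ⟨k, hk⟩ := Function.ne_iff.1 hne
  have hk₀ : 0 < lam k := (hlam₀ k).lt_of_ne' hk
  obtain ⟨K, hK⟩ : ∃ K, AntilipschitzWith K
      (WithLp.ofLp : EuclideanSpace ℝ (Fin p) → Fin p → ℝ) :=
    ⟨_, PiLp.antilipschitzWith_ofLp 2 _⟩
  refine ⟨K / lam k, by positivity, fun b => ?_⟩
  have hsup : ‖b.ofLp‖ ≤ sortedL1 lam b.ofLp / lam k := by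
    refine (pi_norm_le_iff_of_nonneg (div_nonneg (sortedL1_nonneg hlam₀ _) hk₀.le)).2 fun i => ?_
    exact (le_div_iff₀' hk₀).2 (mul_abs_le_sortedL1 hlam hlam₀ _ k i)
  calc ‖b‖ ≤ K * ‖b.ofLp‖ := hK.le_mul_norm rfl b
    _ ≤ K * (sortedL1 lam b.ofLp / lam k) := by gcongr
    _ = K / lam k * sortedL1 lam fun j => b j := by ring

end SortedL1

section Slope

variable {n p : ℕ} {lam : Fin p → ℝ}

lemma Pobj_zero (X : EuclideanSpace ℝ (Fin p) →L[ℝ] EuclideanSpace ℝ (Fin n))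
    (y : EuclideanSpace ℝ (Fin n)) (b : EuclideanSpace ℝ (Fin p)) :
    Pobj 0 X y b = 1 / 2 * ‖y - X b‖ ^ 2 := by
  simp [Pobj, sortedL1]

lemma exists_Pobj_eq_and_norm_sub_le (hlam : Antitone lam) (hlam₀ : 0 ≤ lam)
    (X : EuclideanSpace ℝ (Fin p) →L[ℝ] EuclideanSpace ℝ (Fin n)) (y : EuclideanSpace ℝ (Fin n))
    (a : EuclideanSpace ℝ (Fin p)) (M : ℝ) :
    ∃ R, ∀ b, Pobj lam X y b ≤ M → ∃ c, Pobj lam X y c = Pobj lam X y a ∧ ‖c - b‖ ≤ R := by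
  rcases eq_or_ne lam 0 with rfl | hne
  · obtain ⟨K, hK, hnear⟩ := exists_apply_eq_and_norm_sub_le X
    refine ⟨K * (‖y - X a‖ + √(2 * M)), fun b hb => ?_⟩
    obtain ⟨c, hXc, hcb⟩ := hnear a b
    refine ⟨c, by rw [Pobj_zero, Pobj_zero, hXc], hcb.trans ?_⟩
    have hres : ‖y - X b‖ ≤ √(2 * M) :=
      Real.le_sqrt_of_sq_le (by rw [Pobj_zero] at hb; linarith)
    gcongr
    calc ‖X a - X b‖ = ‖(y - X b) - (y - X a)‖ := by rw [sub_sub_sub_cancel_left]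
      _ ≤ ‖y - X a‖ + √(2 * M) := by linarith [norm_sub_le (y - X b) (y - X a)]
  · obtain ⟨K, hK, hcoercive⟩ := exists_norm_le_mul_sortedL1 hlam hlam₀ hne
    refine ⟨‖a‖ + K * M, fun b hb => ⟨a, rfl, ?_⟩⟩
    have hJ : sortedL1 lam (fun j => b j) ≤ M :=
      (le_add_of_nonneg_left (by positivity)).trans hb
    grw [norm_sub_le, hcoercive b, hJ]

theorem hybrid_algorithm_convergence_general (hlam : Antitone lam) (hlam₀ : 0 ≤ lam)
    {X : EuclideanSpace ℝ (Fin p) →L[ℝ] EuclideanSpace ℝ (Fin n)} (hX : X ≠ 0)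
    {y : EuclideanSpace ℝ (Fin n)} {b : ℕ → EuclideanSpace ℝ (Fin p)}
    (hdescent : Antitone fun t => Pobj lam X y (b t))
    (hprox : ∃ᶠ t in atTop, IsMinOn (proxObj lam X y (b t)) Set.univ (b (t + 1)))
    {bstar : EuclideanSpace ℝ (Fin p)} (hstar : IsMinOn (Pobj lam X y) Set.univ bstar) :
    Tendsto (fun t => Pobj lam X y (b t) - Pobj lam X y bstar) atTop (𝓝 0) := by
  have hconvex : ConvexOn ℝ Set.univ
      fun u : EuclideanSpace ℝ (Fin p) => sortedL1 lam fun j => u j :=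
    (convexOn_sortedL1 hlam hlam₀).comp_linearMap (WithLp.linearEquiv 2 ℝ (Fin p → ℝ)).toLinearMap
  have hL : 0 < ‖X‖ ^ 2 := pow_pos (norm_pos_iff.2 hX) 2
  obtain ⟨R, hR⟩ := exists_Pobj_eq_and_norm_sub_le hlam hlam₀ X y bstar (Pobj lam X y (b 0))
  exact tendsto_of_frequently_isMinOn_quadraticModel hconvex hL.le
    (linearization_le_half_norm_sub_apply_sq X y)
    (half_norm_sub_apply_sq_le_linearization_add_sq X y) hdescent
    (hprox.mono fun t => (isMinOn_prox_iff_isMinOn_quadraticModel hL _ _ _ _).1)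
    (isMinOn_univ_iff.1 hstar) fun t => hR (b t) (hdescent t.zero_le)

end Slope

/-- convergence of the hybrid algorithm: if `λ` is nonincreasing with
`λ_p > 0`, `X ≠ 0`, the sequence `β^{(t)}` is nonincreasing in objective value, and at every
iteration `t ≡ 0 (mod v)` the next iterate is the unique minimizer of the proximal gradient
objective with step size `1/L`, `L = ‖X‖₂²`, then `P(β^{(t)}) − P(β*) → 0` for any global
minimizer `β*` of `P`. -/
theorem hybrid_algorithm_convergence
    {n p : ℕ} (hn : 0 < n) (hp : 0 < p)
    (lam : Fin p → ℝ)
    (hlam_mono : ∀ i j : Fin p, i ≤ j → lam j ≤ lam i)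
    (hlam_last : 0 < lam ⟨p - 1, by omega⟩)
    (X : EuclideanSpace ℝ (Fin p) →L[ℝ] EuclideanSpace ℝ (Fin n)) (hX : X ≠ 0)
    (y : EuclideanSpace ℝ (Fin n))
    (v : ℕ) (hv : 1 ≤ v)
    (bseq : ℕ → EuclideanSpace ℝ (Fin p))
    (h_descent : ∀ t : ℕ, Pobj lam X y (bseq (t + 1)) ≤ Pobj lam X y (bseq t))
    (h_prox : ∀ t : ℕ, t % v = 0 →
      (∀ u, proxObj lam X y (bseq t) (bseq (t + 1)) ≤ proxObj lam X y (bseq t) u) ∧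
      (∀ u, (∀ u', proxObj lam X y (bseq t) u ≤ proxObj lam X y (bseq t) u') →
        u = bseq (t + 1)))
    (bstar : EuclideanSpace ℝ (Fin p))
    (h_star : ∀ u, Pobj lam X y bstar ≤ Pobj lam X y u) :
    Filter.Tendsto (fun t : ℕ => Pobj lam X y (bseq t) - Pobj lam X y bstar)
      Filter.atTop (nhds 0) := by
  have hlam₀ : 0 ≤ lam := fun j => hlam_last.le.trans (hlam_mono j _ (Nat.le_sub_one_of_lt j.isLt))
  exact hybrid_algorithm_convergence_general hlam_mono hlam₀ hX (antitone_nat_of_succ_le h_descent)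
    ((Nat.frequently_mod_eq hv).mono fun t ht => isMinOn_univ_iff.2 (h_prox t ht).1)
    (isMinOn_univ_iff.2 h_star)
end
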